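/- Let I ⊆ R be a square-free monomial ideal whose labeled hypergraph H(I) = (V, X, E, 𝓔) has isolated simple edges (every open vertex lies in exactly one simple edge). Then reg(R/I) = |X| − |V| + Σ_{F ∈ 𝓔, F simple} (|F| − 1). In particular, reg(R/I) is independent of the base field K. -/

import Mathlib

/-!
Write `X` for the set of variables occurring in the generators. The minimal edges of the hypergraph
are the simple edges and the singleton edges, and isolation of the simple edges says exactly that
they partition the vertices. Choosing one label for each minimal edge gives a set `T` of variables
which every generator meets exactly once, and the claimed value is `|X| - |T|`.

*Upper bound* (`vanish_of_inter_le_one`). If every generator meets `T` at most once, then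
`reg (R/I) ≤ |X \ T|`. For a variable `x ∉ T` the sequence
`0 → R/(I : x)(-1) → R/I → R/(I, x) → 0` reduces the claim to two ideals satisfying the same
hypothesis with `T ∪ {x}` in place of `T` (`vanish_step`). When no variable is left outside `T`, the
ideal is generated by variables; the variables outside the ideal are regular on the quotient and are
removed one by one, since multiplication by `x` is null-homotopic on the Koszul complex
(`kos_wedge`, `vanish_regular`). The argument works with polynomial representatives of Koszul
chains and congruences modulo `I`, for all homological degrees at once.

*Lower bound* (`bettiNe_of_retract`). In multidegree `X` the Koszul complex of `R/I` has as basis the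
sets `U ⊆ X` meeting every generator. `T` is one of them, and it is a cycle because each of its
elements is the only element of `T` in some generator. It is not a boundary: every edge contains a
minimal edge, which gives a map `g` from `X` to `T`, identical on `T`, and the top exterior form on
`T` pulled back along `g` takes the value `±1` on `T` and vanishes on boundaries
(`form_boundary`). Dropping the sets `U` that miss a generator does no harm, because the form is
already zero on them.
-/

/-!
Common setup: square-free monomial ideals in `R = K[A]` (here `MvPolynomial σ K`
with `σ` the finite alphabet `A`), encoded by the finite antichain `G` of
supports of their minimal monomial generators; the labeled hypergraph `H(I)`
of such an ideal, whose vertex set is (in bijection with) `G` and whose edge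
labeled by a variable `a` is `E_a = { S ∈ G : a ∈ S }`; and Castelnuovo–Mumford
regularity and projective dimension of `R/I`, defined via graded Betti numbers
`β_{ij}(R/I) = dim_K Tor_i^R(R/I, K)_j`, which are computed from the Koszul
complex of the variables tensored with `R/I`.
-/

open MvPolynomial Finset
open scoped Classical

namespace SqfreeHyp

variable (σ : Type) [Fintype σ] [LinearOrder σ] (K : Type) [Field K]

/-- The square-free monomial `∏_{a ∈ S} a`. -/
noncomputable def sqMon (S : Finset σ) : MvPolynomial σ K := ∏ a ∈ S, X a

/-- The square-free monomial ideal whose (minimal) monomial generators have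
supports exactly the members of `G`. -/
noncomputable def monIdeal (G : Finset (Finset σ)) : Ideal (MvPolynomial σ K) :=
  Ideal.span ((fun S => sqMon σ K S) '' (G : Set (Finset σ)))

/-- `G` is an antichain under inclusion (= divisibility of the square-free
monomials): the corresponding monomial generating set is minimal. -/
def MinGens (G : Finset (Finset σ)) : Prop := ∀ S ∈ G, ∀ T ∈ G, S ⊆ T → S = T

/-- `E_a`: the edge of the labeled hypergraph `H(I)` labeled by the variable `a`,
consisting of the (vertices corresponding to the) generators divisible by `a`. -/
def EdgeOf (G : Finset (Finset σ)) (a : σ) : Finset (Finset σ) :=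
  G.filter (fun S => a ∈ S)

/-- The set `𝓔` of (nonempty) edges of the labeled hypergraph. -/
noncomputable def edgeSet (G : Finset (Finset σ)) : Finset (Finset (Finset σ)) :=
  (Finset.univ.image (EdgeOf σ G)).filter (· ≠ ∅)

/-- `X`: the set of variables appearing among the generators (the labels). -/
def varsOf (G : Finset (Finset σ)) : Finset σ := G.biUnion id

/-- A vertex is closed if its singleton is an edge. -/
def Closed (G : Finset (Finset σ)) (v : Finset σ) : Prop :=
  ∃ a : σ, EdgeOf σ G a = {v}

/-- The neighbors `N_H(v)` of a vertex: the other vertices sharing an edge with `v`. -/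
noncomputable def Neighbors (G : Finset (Finset σ)) (v : Finset σ) : Finset (Finset σ) :=
  G.filter (fun w => w ≠ v ∧ ∃ a : σ, v ∈ EdgeOf σ G a ∧ w ∈ EdgeOf σ G a)

/-- The open (= not closed) vertices. -/
noncomputable def openVerts (G : Finset (Finset σ)) : Finset (Finset σ) :=
  G.filter (fun v => ¬ Closed σ G v)

/-- The minimal members of a family of supports (used to pass to the minimal
monomial generating sets of colon ideals and sums). -/
def minimalize (A : Finset (Finset σ)) : Finset (Finset σ) :=
  A.filter (fun S => ∀ T ∈ A, T ⊆ S → T = S)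

/-- An edge is simple if it has at least two vertices and has no proper
subedge besides `∅`. -/
def SimpleEdge (G : Finset (Finset σ)) (F : Finset (Finset σ)) : Prop :=
  F ∈ edgeSet σ G ∧ 2 ≤ F.card ∧ ∀ F' ∈ edgeSet σ G, F' ⊆ F → F' = F

/-- The set of simple edges. -/
noncomputable def simpleEdges (G : Finset (Finset σ)) : Finset (Finset (Finset σ)) :=
  (edgeSet σ G).filter (fun F => SimpleEdge σ G F)

/-- `H(I)` has isolated simple edges: every open vertex is contained in
exactly one simple edge. -/
def HasIsolatedSimpleEdges (G : Finset (Finset σ)) : Prop :=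
  ∀ v ∈ G, ¬ Closed σ G v → ∃! F : Finset (Finset σ), SimpleEdge σ G F ∧ v ∈ F

/-! ### Regularity via graded Betti numbers.
`β_{ij}(R/I) = dim_K Tor_i^R(R/I,K)_j` where `Tor` is computed by the Koszul
complex on the variables of `R` tensored with `R/I`; its `i`-th term has basis
indexed by `i`-element subsets of the variables, with coefficients in `R/I`. -/

/-- Index of the degree-`i` term of the Koszul complex. -/
abbrev KT (i : ℕ) : Type _ := {T : Finset σ // T.card = i}

/-- The Koszul differential on `K_•(x_a : a) ⊗ R/I`. -/
noncomputable def kd (I : Ideal (MvPolynomial σ K)) (i : ℕ)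
    (c : KT σ i →₀ (MvPolynomial σ K ⧸ I)) :
    KT σ (i - 1) →₀ (MvPolynomial σ K ⧸ I) :=
  c.sum fun T m => ∑ a ∈ T.1.attach,
    ((-1 : ℤ) ^ ((T.1.filter (fun b => b < a.1)).card)) •
      Finsupp.single
        (⟨T.1.erase a.1, by rw [Finset.card_erase_of_mem a.2, T.2]⟩ : KT σ (i - 1))
        ((X a.1 : MvPolynomial σ K) • m)

/-- `c` is homogeneous of internal degree `j` (each coefficient at a size-`i`
subset is the class of a homogeneous polynomial of degree `j - i`). -/
def IsHomogEl (I : Ideal (MvPolynomial σ K)) (i j : ℕ)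
    (c : KT σ i →₀ (MvPolynomial σ K ⧸ I)) : Prop :=
  ∀ T : KT σ i, ∃ p : MvPolynomial σ K,
    p.IsHomogeneous (j - i) ∧ Ideal.Quotient.mk I p = c T

/-- The graded Betti number `β_{ij}(R/I)` is nonzero: there is a homogeneous
cycle of internal degree `j` in homological degree `i` of the Koszul complex
tensored with `R/I` which is not a boundary. -/
def BettiNe (I : Ideal (MvPolynomial σ K)) (i j : ℕ) : Prop :=
  ∃ c : KT σ i →₀ (MvPolynomial σ K ⧸ I),
    IsHomogEl σ K I i j c ∧ kd σ K I i c = 0 ∧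
    ∀ b : KT σ (i + 1) →₀ (MvPolynomial σ K ⧸ I), kd σ K I (i + 1) b ≠ c

/-- Castelnuovo–Mumford regularity of `R/I`: `max { j - i : β_{ij}(R/I) ≠ 0 }`. -/
noncomputable def reg (I : Ideal (MvPolynomial σ K)) : ℤ :=
  sSup { d : ℤ | ∃ i j : ℕ, BettiNe σ K I i j ∧ d = (j : ℤ) - (i : ℤ) }

/-- Projective dimension of `R/I`: `max { i : β_{ij}(R/I) ≠ 0 for some j }`. -/
noncomputable def pdim (I : Ideal (MvPolynomial σ K)) : ℕ :=
  sSup { i : ℕ | ∃ j : ℕ, BettiNe σ K I i j }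

end SqfreeHyp

open SqfreeHyp

namespace SqfreeHyp

set_option linter.unusedSectionVars false

/-! ### The Koszul complex with polynomial coefficients -/

section Koszul

variable {σ : Type} [Fintype σ] [LinearOrder σ] {K : Type} [Field K]

/-- The sign `±1` attached to a pair of variables: `-1` when `b < a`. -/
def eps (a b : σ) : ℤ := if b < a then -1 else 1

/-- The Koszul sign of `a` relative to `U`: `(-1)` to the number of `b ∈ U` below `a`. -/
def sg (a : σ) (U : Finset σ) : ℤ := ∏ b ∈ U, eps a b

lemma eps_mul_self (a b : σ) : eps a b * eps a b = 1 := by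
  unfold eps; split_ifs <;> norm_num

lemma eps_antisymm {a b : σ} (h : a ≠ b) : eps a b = -eps b a := by
  unfold eps
  rcases lt_or_gt_of_ne h with h | h
  · simp [h, h.not_gt]
  · simp [h, h.not_gt]

lemma sg_eq_pow (a : σ) (U : Finset σ) :
    sg a U = (-1 : ℤ) ^ (U.filter (fun b => b < a)).card := by
  unfold sg eps
  rw [Finset.prod_ite]
  simp

lemma sg_mul_self (a : σ) (U : Finset σ) : sg a U * sg a U = 1 := by
  unfold sg
  rw [← Finset.prod_mul_distrib]
  exact Finset.prod_eq_one fun b _ => eps_mul_self a b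

lemma sg_insert (b : σ) {a : σ} {U : Finset σ} (h : a ∉ U) :
    sg b (insert a U) = eps b a * sg b U := by
  unfold sg
  rw [Finset.prod_insert h]

/-- The Koszul differential on families `p`, where `p W` is the coefficient of the
basis element indexed by the set `W` of variables; all homological degrees are treated at once. -/
noncomputable def kos (p : Finset σ → MvPolynomial σ K) (U : Finset σ) : MvPolynomial σ K :=
  ∑ a ∈ Uᶜ, sg a U • (X a * p (insert a U))

lemma kos_add (p q : Finset σ → MvPolynomial σ K) (U : Finset σ) :
    kos (fun W => p W + q W) U = kos p U + kos q U := by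
  simp only [kos, mul_add, smul_add, Finset.sum_add_distrib]

lemma kos_sub (p q : Finset σ → MvPolynomial σ K) (U : Finset σ) :
    kos (fun W => p W - q W) U = kos p U - kos q U := by
  simp only [kos, mul_sub, smul_sub, Finset.sum_sub_distrib]

lemma kos_mul (r : MvPolynomial σ K) (p : Finset σ → MvPolynomial σ K) (U : Finset σ) :
    kos (fun W => r * p W) U = r * kos p U := by
  simp only [kos, Finset.mul_sum]
  refine Finset.sum_congr rfl fun a _ => ?_
  rw [mul_smul_comm, mul_left_comm]

lemma kos_mem {I : Ideal (MvPolynomial σ K)} {p : Finset σ → MvPolynomial σ K}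
    (h : ∀ W, p W ∈ I) (U : Finset σ) : kos p U ∈ I :=
  Submodule.sum_mem _ fun _ _ => zsmul_mem (I.mul_mem_left _ (h _)) _

lemma isHomogeneous_zsmul {p : MvPolynomial σ K} {d : ℕ} (h : p.IsHomogeneous d) (n : ℤ) :
    (n • p).IsHomogeneous d :=
  (homogeneousSubmodule σ K d).toAddSubgroup.zsmul_mem h n

lemma kos_homogeneous {p : Finset σ → MvPolynomial σ K} {d : ℕ}
    (h : ∀ W, (p W).IsHomogeneous d) (U : Finset σ) : (kos p U).IsHomogeneous (d + 1) := by
  refine IsHomogeneous.sum _ _ _ fun a _ => isHomogeneous_zsmul ?_ _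
  rw [add_comm]
  exact (isHomogeneous_X K a).mul (h _)

lemma kos_kos (p : Finset σ → MvPolynomial σ K) (U : Finset σ) : kos (kos p) U = 0 := by
  unfold kos
  simp only [Finset.mul_sum, Finset.smul_sum]
  rw [Finset.sum_sigma']
  refine Finset.sum_involution (fun z _ => ⟨z.2, z.1⟩) ?_ ?_ ?_ ?_
  · rintro ⟨a, b⟩ h
    simp only [Finset.mem_sigma, Finset.mem_compl, Finset.mem_insert, not_or] at h
    obtain ⟨ha, hba, hb⟩ := h
    simp only
    rw [sg_insert b ha, sg_insert a hb, eps_antisymm hba, Finset.insert_comm b a]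
    simp only [mul_smul_comm, smul_smul]
    rw [mul_left_comm (X b), show sg b U * (eps a b * sg a U) = -(sg a U * (-eps a b * sg b U)) by
      ring]
    simp
  · rintro ⟨a, b⟩ h _ he
    simp only [Finset.mem_sigma, Finset.mem_compl, Finset.mem_insert, not_or] at h
    simp only [Sigma.mk.injEq, heq_eq_eq] at he
    exact h.2.1 he.1
  · rintro ⟨a, b⟩ h
    simp only [Finset.mem_sigma, Finset.mem_compl, Finset.mem_insert, not_or] at h ⊢
    exact ⟨h.2.2, fun e => h.2.1 e.symm, h.1⟩
  · rintro ⟨a, b⟩ h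
    rfl

/-- Exterior multiplication by the basis element of the variable `x`. -/
noncomputable def wedge (x : σ) (p : Finset σ → MvPolynomial σ K) (U : Finset σ) :
    MvPolynomial σ K :=
  if x ∈ U then sg x (U.erase x) • p (U.erase x) else 0

lemma wedge_mem {I : Ideal (MvPolynomial σ K)} (x : σ) {p : Finset σ → MvPolynomial σ K}
    (h : ∀ W, p W ∈ I) (U : Finset σ) : wedge x p U ∈ I := by
  unfold wedge
  split_ifs
  · exact zsmul_mem (h _) _
  · exact I.zero_mem

lemma wedge_homogeneous (x : σ) {p : Finset σ → MvPolynomial σ K} {d : ℕ}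
    (h : ∀ W, (p W).IsHomogeneous d) (U : Finset σ) : (wedge x p U).IsHomogeneous d := by
  unfold wedge
  split_ifs
  · exact isHomogeneous_zsmul (h _) _
  · exact isHomogeneous_zero _ _ _

/-- Exterior multiplication by `x` is a null-homotopy of multiplication by `x`. -/
lemma kos_wedge (x : σ) (p : Finset σ → MvPolynomial σ K) (U : Finset σ) :
    kos (wedge x p) U = X x * p U - wedge x (kos p) U := by
  by_cases hx : x ∈ U
  · obtain ⟨V, hxV, rfl⟩ : ∃ V, x ∉ V ∧ U = insert x V :=
      ⟨U.erase x, Finset.notMem_erase x U, (Finset.insert_erase hx).symm⟩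
    have hc : Vᶜ = insert x (insert x V)ᶜ := by
      ext a; by_cases h : a = x <;> simp [h, hxV]
    simp only [wedge, Finset.mem_insert_self, if_true, Finset.erase_insert hxV]
    rw [kos, kos, hc, Finset.sum_insert (by simp), smul_add, smul_smul, sg_mul_self, one_smul,
      sub_add_cancel_left, Finset.smul_sum, ← Finset.sum_neg_distrib]
    refine Finset.sum_congr rfl fun a ha => ?_
    simp only [Finset.mem_compl, Finset.mem_insert, not_or] at ha
    have he : (insert a (insert x V)).erase x = insert a V := by
      rw [Finset.insert_comm, Finset.erase_insert]
      simp only [Finset.mem_insert, not_or]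
      exact ⟨fun e => ha.1 e.symm, hxV⟩
    rw [wedge, if_pos (by simp), he, sg_insert a hxV, sg_insert x ha.2, eps_antisymm ha.1,
      mul_smul_comm, smul_smul, smul_smul, ← neg_smul]
    congr 1
    linear_combination (-(sg a V * sg x V)) * eps_mul_self x a
  · have h0 : wedge x (kos p) U = 0 := by simp [wedge, hx]
    rw [h0, sub_zero, kos, Finset.sum_eq_single x]
    · simp only [wedge, Finset.mem_insert_self, if_true, Finset.erase_insert hx]
      rw [mul_smul_comm, smul_smul, sg_mul_self, one_smul]
    · intro a _ hax
      rw [wedge, if_neg, mul_zero, smul_zero]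
      simp only [Finset.mem_insert, not_or]
      exact ⟨fun e => hax e.symm, hx⟩
    · intro h
      exact absurd (Finset.mem_compl.2 hx) h

/-- Vanishing of the Koszul homology of `R/I` in the strand whose coefficients have degree
`d + 1`, expressed with polynomial representatives. -/
def Vanish (I : Ideal (MvPolynomial σ K)) (d : ℕ) : Prop :=
  ∀ p : Finset σ → MvPolynomial σ K, (∀ U, (p U).IsHomogeneous (d + 1)) → (∀ U, kos p U ∈ I) →
    ∃ q : Finset σ → MvPolynomial σ K, (∀ U, (q U).IsHomogeneous d) ∧ ∀ U, kos q U - p U ∈ I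

/-! ### Vanishing of Koszul homology by induction on the variables -/

lemma sqMon_eq_monomial (S : Finset σ) :
    sqMon σ K S = monomial (∑ a ∈ S, Finsupp.single a 1) 1 := by
  rw [monomial_sum_one]
  rfl

lemma sum_single_apply (S : Finset σ) (b : σ) :
    (∑ a ∈ S, Finsupp.single a 1 : σ →₀ ℕ) b = if b ∈ S then 1 else 0 := by
  rw [Finsupp.finsetSum_apply]
  simp [Finsupp.single_apply]

lemma mem_monIdeal {G : Finset (Finset σ)} {p : MvPolynomial σ K} :
    p ∈ monIdeal σ K G ↔ ∀ m ∈ p.support, ∃ S ∈ G, ∀ a ∈ S, m a ≠ 0 := by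
  have : monIdeal σ K G = Ideal.span ((fun s => monomial s (1 : K)) ''
      ((fun S : Finset σ => (∑ a ∈ S, Finsupp.single a 1 : σ →₀ ℕ)) '' (G : Set (Finset σ)))) := by
    rw [Set.image_image]
    simp only [monIdeal, sqMon_eq_monomial]
  rw [this, mem_ideal_span_monomial_image]
  refine forall₂_congr fun m _ => ?_
  simp only [Set.exists_mem_image, Finset.mem_coe, Finsupp.le_def, sum_single_apply]
  refine exists_congr fun S => and_congr_right fun _ => ⟨fun h a ha => ?_, fun h a => ?_⟩
  · have := h a
    rw [if_pos ha] at this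
    omega
  · split_ifs with ha
    · exact Nat.one_le_iff_ne_zero.2 (h a ha)
    · exact Nat.zero_le _

lemma X_mul_mem_monIdeal {G : Finset (Finset σ)} {x : σ} {p : MvPolynomial σ K} :
    X x * p ∈ monIdeal σ K G ↔ p ∈ monIdeal σ K (G.image (fun S => S.erase x)) := by
  rw [mem_monIdeal, mem_monIdeal, support_X_mul]
  simp only [Finset.mem_map, addLeftEmbedding_apply, forall_exists_index, and_imp,
    forall_apply_eq_imp_iff₂, Finset.exists_mem_image]
  refine forall₂_congr fun m _ => exists_congr fun S => and_congr_right fun _ =>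
    ⟨fun h a ha => ?_, fun h a ha => ?_⟩
  · have := h a (Finset.mem_of_mem_erase ha)
    rwa [Finsupp.add_apply, Finsupp.single_eq_of_ne (Finset.ne_of_mem_erase ha), zero_add] at this
  · by_cases hax : a = x
    · subst hax; simp
    · have := h a (Finset.mem_erase.2 ⟨hax, ha⟩)
      rw [Finsupp.add_apply]; omega

/-- A homogeneous element of `I + (x)` is congruent modulo `I` to a homogeneous multiple of `x`. -/
lemma exists_quotient {G : Finset (Finset σ)} {x : σ} {p : MvPolynomial σ K} {d : ℕ}
    (hp : p.IsHomogeneous (d + 1)) (h : p ∈ monIdeal σ K (insert {x} G)) :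
    ∃ r : MvPolynomial σ K, r.IsHomogeneous d ∧ p - X x * r ∈ monIdeal σ K G := by
  refine ⟨p.divMonomial (Finsupp.single x 1), ?_, ?_⟩
  · intro m hm
    rw [coeff_divMonomial] at hm
    have := hp hm
    rw [Finsupp.weight_apply] at this ⊢
    rw [Finsupp.sum_add_index (by simp) (by simp)] at this
    simp at this
    simp
    omega
  · have e : p - X x * p.divMonomial (Finsupp.single x 1) = p.modMonomial (Finsupp.single x 1) := by
      rw [sub_eq_iff_eq_add', divMonomial_add_modMonomial_single]
    rw [e, mem_monIdeal]
    intro m hm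
    rw [mem_support_iff] at hm
    have hle : ¬ Finsupp.single x 1 ≤ m := fun hle => hm (coeff_modMonomial_of_le _ hle)
    rw [coeff_modMonomial_of_not_le _ hle] at hm
    obtain ⟨S, hS, hSm⟩ := mem_monIdeal.1 h m (mem_support_iff.2 hm)
    rcases Finset.mem_insert.1 hS with rfl | hS
    · refine absurd ?_ hle
      have := hSm x (by simp)
      rw [Finsupp.single_le_iff]; omega
    · exact ⟨S, hS, hSm⟩

lemma monIdeal_le_insert (G : Finset (Finset σ)) (x : σ) :
    monIdeal σ K G ≤ monIdeal σ K (insert {x} G) :=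
  Ideal.span_mono (Set.image_mono (by simp))

lemma monIdeal_insert_eq (G : Finset (Finset σ)) (x : σ) :
    monIdeal σ K (insert {x} G) = monIdeal σ K (insert {x} (G.filter fun S => x ∉ S)) := by
  refine le_antisymm (fun p hp => ?_)
    (Ideal.span_mono (Set.image_mono (by
      exact_mod_cast Finset.insert_subset_insert _ (Finset.filter_subset _ _))))
  rw [mem_monIdeal] at hp ⊢
  intro m hm
  obtain ⟨S, hS, h⟩ := hp m hm
  by_cases hx : x ∈ S
  · exact ⟨{x}, Finset.mem_insert_self _ _, by simpa using h x hx⟩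
  · refine ⟨S, Finset.mem_insert_of_mem (Finset.mem_filter.2 ⟨?_, hx⟩), h⟩
    refine (Finset.mem_insert.1 hS).resolve_left ?_
    rintro rfl
    exact hx (Finset.mem_singleton_self x)

/-- The induction step along `0 → R/(I : x)(-1) → R/I → R/(I, x) → 0`. -/
lemma vanish_step {G : Finset (Finset σ)} (x : σ) {d : ℕ}
    (hJ : Vanish (monIdeal σ K (G.image fun S => S.erase x)) d)
    (hL : Vanish (monIdeal σ K (insert {x} G)) (d + 1)) :
    Vanish (monIdeal σ K G) (d + 1) := by
  intro p hp hkp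
  obtain ⟨q, hq, hqp⟩ := hL p hp fun U => monIdeal_le_insert G x (hkp U)
  have hhom : ∀ U, (p U - kos q U).IsHomogeneous (d + 1 + 1) := fun U =>
    (hp U).sub (kos_homogeneous hq U)
  have hmem : ∀ U, p U - kos q U ∈ monIdeal σ K (insert {x} G) := fun U => by
    rw [← neg_sub]; exact neg_mem (hqp U)
  choose r hr hs using fun U => exists_quotient (hhom U) (hmem U)
  have hkr : ∀ U, kos r U ∈ monIdeal σ K (G.image fun S => S.erase x) := fun U => by
    rw [← X_mul_mem_monIdeal]
    have h1 := kos_mem hs U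
    rw [kos_sub, kos_sub, kos_mul] at h1
    have h2 : kos (fun W => kos q W) U = 0 := kos_kos q U
    rw [h2, sub_zero] at h1
    exact (Submodule.sub_mem_iff_right _ (hkp U)).1 h1
  obtain ⟨q', hq', hqr⟩ := hJ r hr hkr
  refine ⟨fun U => q U + X x * q' U, fun U => ?_, fun U => ?_⟩
  · refine (hq U).add ?_
    rw [add_comm d 1]
    exact (isHomogeneous_X K x).mul (hq' U)
  · rw [kos_add, kos_mul]
    have h1 := X_mul_mem_monIdeal.2 (hqr U)
    have : kos q U + X x * kos q' U - p U
        = X x * (kos q' U - r U) - (p U - kos q U - X x * r U) := by ring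
    rw [this]
    exact sub_mem h1 (hs U)

/-- If `x` is a nonzerodivisor modulo `I = monIdeal G`, vanishing passes from `R/(I, x)` to
`R/I` in the same degree, because multiplication by `x` is null-homotopic. -/
lemma vanish_regular {G : Finset (Finset σ)} (x : σ) {d : ℕ}
    (hreg : ∀ r : MvPolynomial σ K, X x * r ∈ monIdeal σ K G → r ∈ monIdeal σ K G)
    (hL : Vanish (monIdeal σ K (insert {x} G)) d) :
    Vanish (monIdeal σ K G) d := by
  intro p hp hkp
  obtain ⟨q, hq, hqp⟩ := hL p hp fun U => monIdeal_le_insert G x (hkp U)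
  have hhom : ∀ U, (p U - kos q U).IsHomogeneous (d + 1) := fun U =>
    (hp U).sub (kos_homogeneous hq U)
  have hmem : ∀ U, p U - kos q U ∈ monIdeal σ K (insert {x} G) := fun U => by
    rw [← neg_sub]; exact neg_mem (hqp U)
  choose r hr hs using fun U => exists_quotient (hhom U) (hmem U)
  have hkr : ∀ U, kos r U ∈ monIdeal σ K G := fun U => by
    refine hreg _ ?_
    have h1 := kos_mem hs U
    rw [kos_sub, kos_sub, kos_mul] at h1
    have h2 : kos (fun W => kos q W) U = 0 := kos_kos q U
    rw [h2, sub_zero] at h1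
    exact (Submodule.sub_mem_iff_right _ (hkp U)).1 h1
  refine ⟨fun U => q U + wedge x r U, fun U => (hq U).add (wedge_homogeneous x hr U), fun U => ?_⟩
  rw [kos_add, show kos (fun W => wedge x r W) U = _ from kos_wedge x r U]
  have : kos q U + (X x * r U - wedge x (kos r) U) - p U
      = -(p U - kos q U - X x * r U) - wedge x (kos r) U := by ring
  rw [this]
  exact sub_mem (neg_mem (hs U)) (wedge_mem x hkr U)

/-- Ideals generated by variables (or the unit ideal): regularity at most zero. -/
lemma vanish_linear (d n : ℕ) (G : Finset (Finset σ)) (hG : ∀ S ∈ G, S.card ≤ 1)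
    (hn : (Finset.univ.filter fun x : σ => {x} ∉ G).card = n) :
    Vanish (monIdeal σ K G) d := by
  induction n generalizing G with
  | zero =>
    rw [Finset.card_eq_zero, Finset.filter_eq_empty_iff] at hn
    intro p hp _
    refine ⟨fun _ => 0, fun _ => isHomogeneous_zero _ _ _, fun U => ?_⟩
    refine sub_mem (kos_mem (fun _ => Submodule.zero_mem _) U) (mem_monIdeal.2 fun m hm => ?_)
    have hdeg := hp U (mem_support_iff.1 hm)
    obtain ⟨a, ha⟩ : ∃ a, m a ≠ 0 := by
      by_contra! h
      have : m = 0 := Finsupp.ext h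
      simp [this] at hdeg
    exact ⟨{a}, not_not.1 (hn (Finset.mem_univ a)), by simpa using ha⟩
  | succ n ih =>
    obtain ⟨x, hx⟩ := Finset.card_pos.1 (by omega :
      0 < (Finset.univ.filter fun x : σ => {x} ∉ G).card)
    have hxG : {x} ∉ G := (Finset.mem_filter.1 hx).2
    refine vanish_regular x (fun r hr => ?_) (ih _ ?_ ?_)
    · rw [X_mul_mem_monIdeal] at hr
      rw [mem_monIdeal] at hr ⊢
      intro m hm
      obtain ⟨S', hS', h⟩ := hr m hm
      obtain ⟨S, hS, rfl⟩ := Finset.mem_image.1 hS'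
      refine ⟨S, hS, fun a ha => h a (Finset.mem_erase.2 ⟨?_, ha⟩)⟩
      rintro rfl
      have : S = {a} := (Finset.eq_of_subset_of_card_le (Finset.singleton_subset_iff.2 ha)
        (by simpa using hG S hS)).symm
      exact hxG (this ▸ hS)
    · intro S hS
      rcases Finset.mem_insert.1 hS with rfl | hS
      · simp
      · exact hG S hS
    · have : (Finset.univ.filter fun y : σ => {y} ∉ insert {x} G)
          = (Finset.univ.filter fun y : σ => {y} ∉ G).erase x := by
        ext y
        simp only [Finset.mem_filter, Finset.mem_univ, true_and, Finset.mem_insert, not_or,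
          Finset.mem_erase, Finset.singleton_inj, ne_eq]
      rw [this, Finset.card_erase_of_mem hx, hn]
      rfl

/-- If every generator meets `T` in at most one variable, the regularity is at most the number of
variables outside `T`. -/
lemma vanish_of_inter_le_one (n d : ℕ) (G : Finset (Finset σ)) (T : Finset σ)
    (hT : ∀ S ∈ G, (S ∩ T).card ≤ 1) (hn : Tᶜ.card = n) (hnd : n ≤ d) :
    Vanish (monIdeal σ K G) d := by
  induction n generalizing G T d with
  | zero =>
    have : T = Finset.univ := by
      rwa [Finset.card_eq_zero, Finset.compl_eq_empty_iff] at hn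
    subst this
    exact vanish_linear d _ G (by simpa using hT) rfl
  | succ n ih =>
    obtain ⟨x, hx⟩ := Finset.card_pos.1 (by omega : 0 < Tᶜ.card)
    have hxT : x ∉ T := Finset.mem_compl.1 hx
    obtain ⟨d, rfl⟩ : ∃ e, d = e + 1 := ⟨d - 1, by omega⟩
    have hc : (insert x T)ᶜ.card = n := by
      rw [Finset.compl_insert, Finset.card_erase_of_mem hx, hn]; rfl
    refine vanish_step x (ih d _ (insert x T) ?_ hc (by omega)) ?_
    · intro S' hS'
      obtain ⟨S, hS, rfl⟩ := Finset.mem_image.1 hS'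
      refine (Finset.card_le_card fun a ha => ?_).trans (hT S hS)
      simp only [Finset.mem_inter, Finset.mem_erase, Finset.mem_insert] at ha ⊢
      exact ⟨ha.1.2, ha.2.resolve_left ha.1.1⟩
    · rw [monIdeal_insert_eq]
      refine ih (d + 1) _ (insert x T) (fun S hS => ?_) hc (by omega)
      rcases Finset.mem_insert.1 hS with rfl | hS
      · exact (Finset.card_le_card Finset.inter_subset_left).trans (by simp)
      · obtain ⟨hS, hxS⟩ := Finset.mem_filter.1 hS
        rw [Finset.inter_insert_of_notMem hxS]
        exact hT S hS

/-! ### Comparison with the complex computing the Betti numbers -/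

/-- Extension by zero of a chain of homological degree `i` to all subsets. -/
noncomputable def ext {M : Type} [Zero M] {i : ℕ} (c : KT σ i →₀ M) (W : Finset σ) : M :=
  if h : W.card = i then c ⟨W, h⟩ else 0

lemma ext_single {M : Type} [Zero M] {i : ℕ} (T : KT σ i) (m : M) (W : Finset σ) :
    ext (Finsupp.single T m) W = if W = T.1 then m else 0 := by
  unfold ext
  by_cases h : W = T.1
  · subst h
    simp [T.2]
  · rw [if_neg h]
    split_ifs with hW
    · rw [Finsupp.single_eq_of_ne]
      rintro rfl
      exact h rfl
    · rfl

lemma ext_add {M : Type} [AddZeroClass M] {i : ℕ} (c c' : KT σ i →₀ M) (W : Finset σ) :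
    ext (c + c') W = ext c W + ext c' W := by
  unfold ext; split_ifs <;> simp

lemma kd_zero (I : Ideal (MvPolynomial σ K)) (c : KT σ 0 →₀ MvPolynomial σ K ⧸ I) :
    kd σ K I 0 c = 0 := by
  unfold kd
  refine Finset.sum_eq_zero fun T _ => Finset.sum_eq_zero fun a _ => ?_
  exact absurd a.2 (Finset.card_eq_zero.1 T.2 ▸ Finset.notMem_empty _ :)

/-- Coefficient formula for the Koszul differential. -/
lemma kd_succ_apply (I : Ideal (MvPolynomial σ K)) (i : ℕ)
    (c : KT σ (i + 1) →₀ MvPolynomial σ K ⧸ I) (U : KT σ i) :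
    (kd σ K I (i + 1) c : KT σ i →₀ MvPolynomial σ K ⧸ I) U =
      ∑ a ∈ U.1ᶜ, sg a U.1 • ((X a : MvPolynomial σ K) • ext c (insert a U.1)) := by
  induction c using Finsupp.induction_linear with
  | zero => 
    have : ∀ W, ext (0 : KT σ (i + 1) →₀ MvPolynomial σ K ⧸ I) W = 0 := by
      intro W; unfold ext; split_ifs <;> simp
    simp [kd, this]
  | add c c' hc hc' =>
    simp only [ext_add, smul_add, Finset.sum_add_distrib]
    rw [← hc, ← hc', ← Finsupp.add_apply]
    congr 1
    unfold kd
    rw [Finsupp.sum_add_index']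
    · intro T; simp
    · intro T m m'
      simp only [smul_add, Finsupp.single_add, Finset.sum_add_distrib]
  | single T m =>
    unfold kd
    rw [Finsupp.sum_single_index (by simp)]
    refine (Finsupp.finsetSum_apply _ _ _).trans ?_
    simp only [ext_single]
    have hterm : ∀ a ∈ T.1.attach,
        (((-1 : ℤ) ^ ((T.1.filter (fun b => b < a.1)).card)) • Finsupp.single
          (⟨T.1.erase a.1, by rw [Finset.card_erase_of_mem a.2, T.2]; rfl⟩ : KT σ i)
          ((X a.1 : MvPolynomial σ K) • m)) U =
        (fun a : σ => if T.1.erase a = U.1 then sg a U.1 • ((X a : MvPolynomial σ K) • m)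
          else 0) a.1 := by
      intro a _
      rw [Finsupp.smul_apply, Finsupp.single_apply]
      simp only [Subtype.ext_iff]
      split_ifs with h
      · rw [sg_eq_pow, ← h, Finset.filter_erase, Finset.erase_eq_of_notMem (by simp)]
      · rw [smul_zero]
    refine (Finset.sum_congr rfl hterm).trans ?_
    rw [Finset.sum_attach T.1 fun a : σ => if T.1.erase a = U.1 then
      sg a U.1 • ((X a : MvPolynomial σ K) • m) else 0]
    simp only [smul_ite, smul_zero]
    rw [← Finset.sum_filter, ← Finset.sum_filter]
    refine Finset.sum_congr ?_ fun _ _ => rfl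
    ext a
    simp only [Finset.mem_filter, Finset.mem_compl]
    constructor
    · rintro ⟨h1, h2⟩
      rw [← h2]
      exact ⟨Finset.notMem_erase a _, Finset.insert_erase h1⟩
    · rintro ⟨h1, h2⟩
      rw [← h2]
      exact ⟨Finset.mem_insert_self a _, Finset.erase_insert h1⟩

lemma kd_eq_zero_iff (I : Ideal (MvPolynomial σ K)) (i : ℕ)
    (c : KT σ i →₀ MvPolynomial σ K ⧸ I) :
    kd σ K I i c = 0 ↔ ∀ U : Finset σ,
      ∑ a ∈ Uᶜ, sg a U • ((X a : MvPolynomial σ K) • ext c (insert a U)) = 0 := by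
  cases i with
  | zero =>
    refine iff_of_true (kd_zero I c) fun U => Finset.sum_eq_zero fun a _ => ?_
    rw [ext, dif_neg (by simp), smul_zero, smul_zero]
  | succ i =>
    constructor
    · intro hkc U
      by_cases hU : U.card = i
      · rw [← kd_succ_apply I i c ⟨U, hU⟩, hkc]
        rfl
      · refine Finset.sum_eq_zero fun a ha => ?_
        rw [ext, dif_neg, smul_zero, smul_zero]
        rw [Finset.card_insert_of_notMem (Finset.mem_compl.1 ha)]
        omega
    · intro h
      refine Finsupp.ext fun (U : KT σ i) => ?_
      exact (kd_succ_apply I i c U).trans (h U.1)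

/-- The vanishing property in degree `d` excludes Betti numbers in the strand `j - i = d + 1`. -/
lemma not_bettiNe {I : Ideal (MvPolynomial σ K)} {d i j : ℕ} (hV : Vanish I d)
    (hj : j - i = d + 1) : ¬ BettiNe σ K I i j := by
  rintro ⟨c, hc, hkc, hb⟩
  choose p hp hpc using hc
  let P : Finset σ → MvPolynomial σ K := fun W => if h : W.card = i then p ⟨W, h⟩ else 0
  have hPc : ∀ W, Ideal.Quotient.mk I (P W) = ext c W := by
    intro W
    simp only [P, ext]
    split_ifs
    · exact hpc _
    · exact map_zero _
  have hmk : ∀ (q : Finset σ → MvPolynomial σ K) (U : Finset σ),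
      Ideal.Quotient.mk I (kos q U) =
        ∑ a ∈ Uᶜ, sg a U • ((X a : MvPolynomial σ K) • Ideal.Quotient.mk I (q (insert a U))) := by
    intro q U
    simp only [kos, map_sum, map_zsmul]
    rfl
  have hhom : ∀ U, (P U).IsHomogeneous (d + 1) := fun U => by
    simp only [P]
    split_ifs
    · rw [← hj]; exact hp _
    · exact isHomogeneous_zero _ _ _
  have hcyc : ∀ U, kos P U ∈ I := fun U => by
    rw [← Ideal.Quotient.eq_zero_iff_mem, hmk]
    simp only [hPc]
    exact (kd_eq_zero_iff I i c).1 hkc U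
  obtain ⟨q, _, hqP⟩ := hV P hhom hcyc
  refine hb (Finsupp.equivFunOnFinite.symm fun W => Ideal.Quotient.mk I (q W.1)) ?_
  refine Finsupp.ext fun (U : KT σ i) => ?_
  refine (kd_succ_apply I i _ U).trans ?_
  have h1 : Ideal.Quotient.mk I (kos q U.1) = c U := by
    rw [(Ideal.Quotient.mk_eq_mk_iff_sub_mem _ _).2 (hqP U.1), hPc]
    exact dif_pos U.2
  rw [← h1, hmk]
  refine Finset.sum_congr rfl fun a ha => ?_
  rw [ext, dif_pos (by rw [Finset.card_insert_of_notMem (Finset.mem_compl.1 ha), U.2])]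
  rfl

/-! ### A nonzero Betti number -/

/-- The inversion sign of the function `g` restricted to `U`. -/
def inv (g : σ → σ) (U : Finset σ) : ℤ :=
  ∏ b ∈ U, ∏ c ∈ U, if c < b ∧ g b < g c then -1 else 1

lemma inv_insert (g : σ → σ) {a : σ} {V : Finset σ} (ha : a ∉ V) (hg : ∀ b ∈ V, g b ≠ g a) :
    inv g (insert a V) = sg a V * (∏ b ∈ V, eps (g a) (g b)) * inv g V := by
  unfold inv sg
  rw [Finset.prod_insert ha, Finset.prod_insert ha]
  have h1 : ∀ b ∈ V, (∏ c ∈ insert a V, if c < b ∧ g b < g c then (-1 : ℤ) else 1) =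
      (if a < b ∧ g b < g a then (-1 : ℤ) else 1) *
        ∏ c ∈ V, if c < b ∧ g b < g c then (-1 : ℤ) else 1 :=
    fun b _ => Finset.prod_insert ha
  rw [Finset.prod_congr rfl h1, Finset.prod_mul_distrib, if_neg (by simp), one_mul, ← mul_assoc,
    ← Finset.prod_mul_distrib, ← Finset.prod_mul_distrib]
  have h4 : ∀ b ∈ V, (if b < a ∧ g a < g b then (-1 : ℤ) else 1) *
      (if a < b ∧ g b < g a then (-1 : ℤ) else 1) = eps a b * eps (g a) (g b) := ?_
  · rw [← Finset.prod_mul_distrib, ← Finset.prod_mul_distrib]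
    exact Finset.prod_congr rfl fun b hb => by rw [h4 b hb]
  intro b hb
  have h2 : a ≠ b := fun e => ha (e ▸ hb)
  have h3 := hg b hb
  unfold eps
  rcases lt_or_gt_of_ne h2 with h | h <;> rcases lt_or_gt_of_ne h3 with h' | h' <;>
    simp [h, h', h.not_gt, h'.not_gt]

lemma inv_cast_ne_zero (g : σ → σ) (U : Finset σ) : (inv g U : K) ≠ 0 := by
  unfold inv
  rw [Int.cast_prod, Finset.prod_ne_zero_iff]
  intro b _
  rw [Int.cast_prod, Finset.prod_ne_zero_iff]
  intro c _
  split_ifs <;> simp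

/-- The coordinate of `g_*(U)` at the top exterior form on `T`: the sign of `g` on `U` if `g` maps
`U` bijectively onto `T`, and zero otherwise. -/
def form (g : σ → σ) (T U : Finset σ) : ℤ :=
  if U.image g = T ∧ U.card = T.card then inv g U else 0

/-- The form vanishes on boundaries of the full exterior algebra. -/
lemma form_boundary (g : σ → σ) (T W : Finset σ) (hW : ∀ a ∈ W, g a ∈ T) :
    ∑ a ∈ W, sg a (W.erase a) * form g T (W.erase a) = 0 := by
  by_cases h : ∃ a ∈ W, (W.erase a).image g = T ∧ (W.erase a).card = T.card
  · obtain ⟨a, ha, him, hcard⟩ := h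
    have hinj : Set.InjOn g (W.erase a : Finset σ) := by
      rw [← Finset.card_image_iff, him, hcard]
    have hga : g a ∈ (W.erase a).image g := him ▸ hW a ha
    obtain ⟨b, hb, hgb⟩ := Finset.mem_image.1 hga
    have hba : b ≠ a := Finset.ne_of_mem_erase hb
    have hbW : b ∈ W := Finset.mem_of_mem_erase hb
    obtain ⟨V, haV, hbV, rfl⟩ : ∃ V, a ∉ V ∧ b ∉ V ∧ W = insert a (insert b V) := by
      refine ⟨(W.erase a).erase b, by simp, by simp, ?_⟩
      rw [Finset.insert_erase hb, Finset.insert_erase ha]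
    have ea : (insert a (insert b V)).erase a = insert b V := by
      rw [Finset.erase_insert]
      simp [haV, hba.symm]
    have eb : (insert a (insert b V)).erase b = insert a V := by
      rw [Finset.insert_comm, Finset.erase_insert]
      simp [hbV, hba]
    rw [ea] at him hcard hinj
    rw [Finset.sum_eq_add_of_mem a b ha hbW hba.symm, ea, eb]
    · have hVb : ∀ c ∈ V, g c ≠ g b := fun c hc e =>
        hbV (hinj (by simp [hc]) (by simp) e ▸ hc)
      have hVa : ∀ c ∈ V, g c ≠ g a := hgb ▸ hVb
      have him' : (insert a V).image g = T := by
        rw [Finset.image_insert, ← hgb, ← Finset.image_insert, him]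
      have hcard' : (insert a V).card = T.card := by
        rw [← hcard, Finset.card_insert_of_notMem haV, Finset.card_insert_of_notMem hbV]
      rw [form, form, if_pos ⟨him, hcard⟩, if_pos ⟨him', hcard'⟩, inv_insert g hbV hVb,
        inv_insert g haV hVa, sg_insert a hbV, sg_insert b haV, hgb, eps_antisymm hba]
      ring
    · rintro c hc ⟨hca, hcb⟩
      rw [form, if_neg, mul_zero]
      rintro ⟨h1, h2⟩
      have : Set.InjOn g ((insert a (insert b V)).erase c : Finset σ) := by
        rw [← Finset.card_image_iff, h1, h2]
      refine hba (this ?_ ?_ hgb)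
      · simp [Ne.symm hcb]
      · simp [Ne.symm hca]
  · push Not at h
    refine Finset.sum_eq_zero fun a ha => ?_
    rw [form, if_neg, mul_zero]
    exact fun h' => h a ha h'.1 h'.2

/-- The exponent vector of the squarefree monomial on `S`. -/
noncomputable def expo (S : Finset σ) : σ →₀ ℕ := ∑ a ∈ S, Finsupp.single a 1

lemma sum_insert_erase {M : Type} [AddCommMonoid M] (F : σ → Finset σ → Finset σ → M) :
    ∑ U : Finset σ, ∑ a ∈ Uᶜ, F a U (insert a U) =
      ∑ W : Finset σ, ∑ a ∈ W, F a (W.erase a) W := by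
  rw [Finset.sum_sigma', Finset.sum_sigma']
  refine Finset.sum_bij' (fun z _ => ⟨insert z.2 z.1, z.2⟩) (fun z _ => ⟨z.1.erase z.2, z.2⟩)
    ?_ ?_ ?_ ?_ ?_
  · rintro ⟨U, a⟩ h; simp
  · rintro ⟨U, a⟩ h; simp
  · rintro ⟨U, a⟩ h
    simp only [Finset.mem_sigma, Finset.mem_compl] at h
    simp [Finset.erase_insert h.2]
  · rintro ⟨U, a⟩ h
    simp only [Finset.mem_sigma] at h
    simp [Finset.insert_erase h.2]
  · rintro ⟨U, a⟩ h
    simp only [Finset.mem_sigma, Finset.mem_compl] at h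
    simp [Finset.erase_insert h.2]

/-- The functional on chains of multidegree `X` given by `form` kills every boundary. -/
lemma form_kos (g : σ → σ) (T Y : Finset σ) (hg : ∀ a, g a ∈ T ↔ a ∈ Y)
    (B : Finset σ → MvPolynomial σ K) :
    ∑ U : Finset σ, form g T U • coeff (expo (Y \ U)) (kos B U) = 0 := by
  have key : ∀ U : Finset σ, form g T U • coeff (expo (Y \ U)) (kos B U) =
      ∑ a ∈ Uᶜ, if a ∈ Y then
        (sg a U * form g T U) • coeff (expo (Y \ insert a U)) (B (insert a U)) else 0 := by
    intro U
    rw [kos, coeff_sum, Finset.smul_sum]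
    refine Finset.sum_congr rfl fun a ha => ?_
    have hz : ∀ (n : ℤ) (m : σ →₀ ℕ) (p : MvPolynomial σ K), coeff m (n • p) = n • coeff m p :=
      fun n m p => map_zsmul (lcoeff K m) n p
    rw [hz, smul_smul, mul_comm]
    split_ifs with haY
    · have : expo (Y \ U) = Finsupp.single a 1 + expo (Y \ insert a U) := by
        unfold expo
        rw [Finset.sdiff_insert, Finset.add_sum_erase _ (fun a => Finsupp.single a 1)
          (Finset.mem_sdiff.2 ⟨haY, Finset.mem_compl.1 ha⟩)]
      rw [this, coeff_X_mul]
    · rw [coeff_X_mul', if_neg, smul_zero]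
      rw [Finsupp.mem_support_iff, expo, sum_single_apply]
      simp [haY]
  rw [Finset.sum_congr rfl fun U _ => key U, sum_insert_erase fun a U W => if a ∈ Y then
        (sg a U * form g T U) • coeff (expo (Y \ W)) (B W) else (0 : K)]
  refine Finset.sum_eq_zero fun W _ => ?_
  by_cases hW : W ⊆ Y
  · rw [Finset.sum_congr rfl fun a ha => if_pos (hW ha), ← Finset.sum_smul,
      form_boundary g T W fun a ha => (hg a).2 (hW ha), zero_smul]
  · refine Finset.sum_eq_zero fun a _ => ?_
    split_ifs with haY
    · rw [form, if_neg, mul_zero, zero_smul]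
      rintro ⟨h, _⟩
      refine hW fun b hb => ?_
      by_cases hba : b = a
      · rwa [hba]
      · rw [← hg, ← h]
        exact Finset.mem_image_of_mem g (Finset.mem_erase.2 ⟨hba, hb⟩)
    · rfl

/-- A Betti number in homological degree `|T|` and internal degree `|Y|` is nonzero, where `T` is a
transversal such that every element of `T` is the only one in some generator, and `g` retracts `Y`
onto `T` such that `a` lies in every generator containing `g a`. -/
lemma bettiNe_of_retract (G : Finset (Finset σ)) (g : σ → σ) (T Y : Finset σ)
    (hg : ∀ a, g a ∈ T ↔ a ∈ Y) (hgT : ∀ t ∈ T, g t = t)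
    (hY : ∀ S ∈ G, S ⊆ Y) (hhit : ∀ S ∈ G, ∃ t ∈ T, t ∈ S)
    (hgE : ∀ a ∈ Y, ∀ S ∈ G, g a ∈ S → a ∈ S)
    (hpriv : ∀ t ∈ T, ∃ S ∈ G, S ∩ T = {t}) :
    BettiNe σ K (monIdeal σ K G) T.card Y.card := by
  have hTY : T ⊆ Y := fun t ht => (hg t).1 ((hgT t ht).symm ▸ ht)
  have hmk : ∀ (q : Finset σ → MvPolynomial σ K) (U : Finset σ),
      Ideal.Quotient.mk (monIdeal σ K G) (kos q U) =
        ∑ a ∈ Uᶜ, sg a U • ((X a : MvPolynomial σ K) •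
          Ideal.Quotient.mk (monIdeal σ K G) (q (insert a U))) := by
    intro q U
    simp only [kos, map_sum, map_zsmul]
    rfl
  let t0 : KT σ T.card := ⟨T, rfl⟩
  refine ⟨Finsupp.single t0 (Ideal.Quotient.mk _ (sqMon σ K (Y \ T))), ?_, ?_, ?_⟩
  · intro U
    by_cases hU : U = t0
    · subst hU
      refine ⟨sqMon σ K (Y \ T), ?_, by simp⟩
      rw [← Finset.card_sdiff_of_subset hTY, Finset.card_eq_sum_ones]
      exact IsHomogeneous.prod _ _ _ fun a _ => isHomogeneous_X K a
    · exact ⟨0, isHomogeneous_zero _ _ _, by rw [Finsupp.single_eq_of_ne hU, map_zero]⟩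
  · rw [kd_eq_zero_iff]
    intro U
    refine Finset.sum_eq_zero fun a ha => ?_
    rw [ext_single]
    split_ifs with h
    · have haT : a ∈ T := (show insert a U = T from h) ▸ Finset.mem_insert_self a U
      obtain ⟨S, hS, hST⟩ := hpriv a haT
      suffices h' : (X a : MvPolynomial σ K) * sqMon σ K (Y \ T) ∈ monIdeal σ K G by
        rw [← Ideal.Quotient.eq_zero_iff_mem] at h'
        rw [show (X a : MvPolynomial σ K) • Ideal.Quotient.mk (monIdeal σ K G)
          (sqMon σ K (Y \ T)) = 0 from h', smul_zero]
      have h1 : (X a : MvPolynomial σ K) * sqMon σ K (Y \ T) = sqMon σ K (insert a (Y \ T)) := by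
        unfold sqMon
        rw [Finset.prod_insert (by simp [haT])]
      rw [h1]
      refine Ideal.mem_of_dvd _ (Finset.prod_dvd_prod_of_subset S _ X fun s hs => ?_)
        (Ideal.subset_span ⟨S, hS, rfl⟩)
      rw [Finset.mem_insert, Finset.mem_sdiff]
      by_cases hsT : s ∈ T
      · left
        exact Finset.mem_singleton.1 (hST ▸ Finset.mem_inter.2 ⟨hs, hsT⟩)
      · exact Or.inr ⟨hY S hS hs, hsT⟩
    · rw [smul_zero, smul_zero]
  · intro b hb
    choose B hB using fun W => Ideal.Quotient.mk_surjective (I := monIdeal σ K G) (ext b W)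
    have h0 := form_kos g T Y hg B
    have hval : ∀ U : Finset σ, form g T U • coeff (expo (Y \ U)) (kos B U) =
        if U = T then (inv g T : K) else 0 := by
      intro U
      by_cases hU : U.image g = T ∧ U.card = T.card
      swap
      · rw [form, if_neg hU, zero_smul, if_neg]
        rintro rfl
        refine hU ⟨?_, rfl⟩
        ext t
        simp only [Finset.mem_image]
        exact ⟨fun ⟨s, hs, e⟩ => e ▸ (hgT s hs).symm ▸ hs, fun ht => ⟨t, ht, hgT t ht⟩⟩
      -- A nonzero value of the form forces `U` to meet every generator, so that no element of the
      -- ideal involves the monomial on `Y \ U`.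
      have hI : ∀ r ∈ monIdeal σ K G, coeff (expo (Y \ U)) r = 0 := by
        intro r hr
        by_contra hne
        obtain ⟨S, hS, hSm⟩ := mem_monIdeal.1 hr _ (mem_support_iff.2 hne)
        obtain ⟨t, ht, htS⟩ := hhit S hS
        rw [← hU.1] at ht
        obtain ⟨a, haU, rfl⟩ := Finset.mem_image.1 ht
        have haY : a ∈ Y := (hg a).1 (hU.1 ▸ ht)
        refine hSm a (hgE a haY S hS htS) ?_
        rw [expo, sum_single_apply, if_neg]
        simp [haU]
      have hkU : Ideal.Quotient.mk (monIdeal σ K G) (kos B U) =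
          Ideal.Quotient.mk (monIdeal σ K G) (if U = T then sqMon σ K (Y \ T) else 0) := by
        rw [hmk]
        simp only [hB]
        rw [← kd_succ_apply (monIdeal σ K G) T.card b ⟨U, hU.2⟩, hb]
        refine (Finsupp.single_apply).trans ?_
        simp only [t0, Subtype.ext_iff, eq_comm (a := T)]
        split_ifs
        · rfl
        · exact (map_zero _).symm
      rw [Ideal.Quotient.mk_eq_mk_iff_sub_mem] at hkU
      have h1 := hI _ hkU
      rw [coeff_sub, sub_eq_zero] at h1
      rw [h1]
      split_ifs with hUT
      · subst hUT
        rw [sqMon_eq_monomial, expo, coeff_monomial, if_pos rfl, form, if_pos hU, zsmul_one]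
      · rw [coeff_zero, smul_zero]
    rw [Finset.sum_congr rfl fun U _ => hval U, Finset.sum_ite_eq' Finset.univ T,
      if_pos (Finset.mem_univ _)] at h0
    refine inv_cast_ne_zero g T h0

end Koszul
/-! ### The transversal given by the minimal edges -/

section Combinatorics

variable {σ : Type} [Fintype σ] [LinearOrder σ]

/-- The edges that are minimal under inclusion: the simple edges and the singleton edges. -/
noncomputable def minEdges (G : Finset (Finset σ)) : Finset (Finset (Finset σ)) :=
  (edgeSet σ G).filter fun F => ∀ F' ∈ edgeSet σ G, F' ⊆ F → F' = F

lemma mem_edgeSet {G : Finset (Finset σ)} {F : Finset (Finset σ)} :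
    F ∈ edgeSet σ G ↔ (∃ a, EdgeOf σ G a = F) ∧ F ≠ ∅ := by
  simp [edgeSet]

lemma mem_edgeOf {G : Finset (Finset σ)} {a : σ} {S : Finset σ} :
    S ∈ EdgeOf σ G a ↔ S ∈ G ∧ a ∈ S := Finset.mem_filter

lemma minEdges_subset {G : Finset (Finset σ)} {F : Finset (Finset σ)} (hF : F ∈ minEdges G) :
    F ⊆ G := by
  obtain ⟨⟨a, rfl⟩, _⟩ := mem_edgeSet.1 (Finset.mem_filter.1 hF).1
  exact Finset.filter_subset _ _

lemma mem_minEdges_iff {G : Finset (Finset σ)} {F : Finset (Finset σ)} :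
    F ∈ minEdges G ↔ SimpleEdge σ G F ∨ ∃ v, Closed σ G v ∧ F = {v} := by
  constructor
  · intro h
    obtain ⟨hF, hmin⟩ := Finset.mem_filter.1 h
    obtain ⟨⟨a, ha⟩, hne⟩ := mem_edgeSet.1 hF
    have hpos := Finset.card_pos.2 (Finset.nonempty_iff_ne_empty.2 hne)
    by_cases h2 : 2 ≤ F.card
    · exact Or.inl ⟨hF, h2, hmin⟩
    · obtain ⟨v, rfl⟩ := Finset.card_eq_one.1 (by omega : F.card = 1)
      exact Or.inr ⟨v, ⟨a, ha⟩, rfl⟩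
  · rintro (h | ⟨v, ⟨a, ha⟩, rfl⟩)
    · exact Finset.mem_filter.2 ⟨h.1, h.2.2⟩
    · refine Finset.mem_filter.2 ⟨mem_edgeSet.2 ⟨⟨a, ha⟩, Finset.singleton_ne_empty v⟩, ?_⟩
      intro F' hF' hsub
      exact (Finset.subset_singleton_iff.1 hsub).resolve_left (mem_edgeSet.1 hF').2

/-- With isolated simple edges, the minimal edges partition the vertex set. -/
lemma existsUnique_minEdge {G : Finset (Finset σ)} (h : HasIsolatedSimpleEdges σ G)
    {v : Finset σ} (hv : v ∈ G) : ∃! F, F ∈ minEdges G ∧ v ∈ F := by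
  by_cases hc : Closed σ G v
  · refine ⟨{v}, ⟨mem_minEdges_iff.2 (Or.inr ⟨v, hc, rfl⟩), by simp⟩, ?_⟩
    rintro F ⟨hF, hvF⟩
    obtain ⟨a, ha⟩ := hc
    exact ((Finset.mem_filter.1 hF).2 {v} (mem_edgeSet.2 ⟨⟨a, ha⟩, by simp⟩) (by simpa)).symm
  · obtain ⟨F, ⟨hF, hvF⟩, huniq⟩ := h v hv hc
    refine ⟨F, ⟨mem_minEdges_iff.2 (Or.inl hF), hvF⟩, ?_⟩
    rintro F' ⟨hF', hvF'⟩
    rcases mem_minEdges_iff.1 hF' with h' | ⟨w, hw, rfl⟩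
    · exact huniq F' ⟨h', hvF'⟩
    · exact absurd ((Finset.mem_singleton.1 hvF') ▸ hw) hc

lemma exists_minEdge_subset {G : Finset (Finset σ)} {F : Finset (Finset σ)}
    (hF : F ∈ edgeSet σ G) : ∃ F' ∈ minEdges G, F' ⊆ F := by
  obtain ⟨F', hle, hm⟩ := (edgeSet σ G).exists_le_minimal hF
  refine ⟨F', Finset.mem_filter.2 ⟨hm.1, fun F'' h'' hsub => ?_⟩, hle⟩
  exact le_antisymm hsub (hm.2 h'' hsub)

lemma card_minEdges {G : Finset (Finset σ)} (h : HasIsolatedSimpleEdges σ G) :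
    ∑ F ∈ simpleEdges σ G, ((F.card : ℤ) - 1) = (G.card : ℤ) - (minEdges G).card := by
  have h1 : ∑ F ∈ simpleEdges σ G, ((F.card : ℤ) - 1) = ∑ F ∈ minEdges G, ((F.card : ℤ) - 1) := by
    refine Finset.sum_subset (fun F hF => mem_minEdges_iff.2 (Or.inl (Finset.mem_filter.1 hF).2))
      fun F hF hn => ?_
    rcases mem_minEdges_iff.1 hF with h' | ⟨v, _, rfl⟩
    · exact absurd (Finset.mem_filter.2 ⟨h'.1, h'⟩) hn
    · simp
  have h2 : G = (minEdges G).biUnion id := by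
    ext v
    simp only [Finset.mem_biUnion, id]
    constructor
    · intro hv
      obtain ⟨F, hF, _⟩ := existsUnique_minEdge h hv
      exact ⟨F, hF⟩
    · rintro ⟨F, hF, hvF⟩
      exact minEdges_subset hF hvF
  have h3 : G.card = ∑ F ∈ minEdges G, F.card := by
    conv_lhs => rw [h2]
    refine Finset.card_biUnion fun F hF F' hF' hne => Finset.disjoint_left.2 fun v hv hv' => hne ?_
    exact (existsUnique_minEdge h (minEdges_subset hF hv)).unique ⟨hF, hv⟩ ⟨hF', hv'⟩
  rw [h1, Finset.sum_sub_distrib, h3]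
  simp

lemma mem_varsOf {G : Finset (Finset σ)} {a : σ} :
    a ∈ varsOf σ G ↔ ∃ S ∈ G, a ∈ S := by
  simp [varsOf]

end Combinatorics

end SqfreeHyp

/-- Theorem `Tsimple`: if the labeled hypergraph of the
square-free monomial ideal `I` has isolated simple edges, then
`reg(R/I) = |X| − |V| + Σ_{F simple} (|F| − 1)`; in particular the regularity
is given by this combinatorial formula for every base field `K`. -/
theorem stmt_13 (σ : Type) [Fintype σ] [LinearOrder σ] (K : Type) [Field K]
    (G : Finset (Finset σ)) (hmin : MinGens σ G) (hne : ∀ S ∈ G, S.Nonempty)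
    (hisoe : HasIsolatedSimpleEdges σ G) :
    reg σ K (monIdeal σ K G) =
      ((varsOf σ G).card : ℤ) - (G.card : ℤ) +
        ∑ F ∈ simpleEdges σ G, ((F.card : ℤ) - 1) := by
  -- `ρ` picks a label for each minimal edge and `φ` a minimal edge below each edge.
  have hρ : ∀ F : minEdges G, ∃ a, EdgeOf σ G a = F.1 := fun F =>
    (mem_edgeSet.1 (Finset.mem_filter.1 F.2).1).1
  choose ρ hρ using hρ
  have hφ : ∀ a : varsOf σ G, ∃ F : minEdges G, F.1 ⊆ EdgeOf σ G a := by
    rintro ⟨a, ha⟩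
    obtain ⟨S, hS, haS⟩ := mem_varsOf.1 ha
    obtain ⟨F, hF, hsub⟩ := exists_minEdge_subset (mem_edgeSet.2 ⟨⟨a, rfl⟩,
      Finset.ne_empty_of_mem (mem_edgeOf.2 ⟨hS, haS⟩)⟩)
    exact ⟨⟨F, hF⟩, hsub⟩
  choose φ hφ using hφ
  have hρinj : Function.Injective ρ := fun F F' h => Subtype.ext (by rw [← hρ, ← hρ, h])
  let T : Finset σ := Finset.univ.image ρ
  have hTcard : T.card = (minEdges G).card := by
    rw [Finset.card_image_of_injective _ hρinj, Finset.card_univ, Fintype.card_coe]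
  have hρY : ∀ F, ρ F ∈ varsOf σ G := by
    intro F
    obtain ⟨v, hv⟩ := Finset.nonempty_iff_ne_empty.2
      (mem_edgeSet.1 (Finset.mem_filter.1 F.2).1).2
    rw [← hρ] at hv
    exact mem_varsOf.2 ⟨v, mem_edgeOf.1 hv⟩
  have hTY : T ⊆ varsOf σ G := fun t ht => by
    obtain ⟨F, _, rfl⟩ := Finset.mem_image.1 ht
    exact hρY F
  -- Every generator contains exactly one element of `T`.
  have hone : ∀ S ∈ G, ∃ t, S ∩ T = {t} := by
    intro S hS
    obtain ⟨F, ⟨hF, hSF⟩, huniq⟩ := existsUnique_minEdge hisoe hS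
    refine ⟨ρ ⟨F, hF⟩, ?_⟩
    ext t
    rw [Finset.mem_inter, Finset.mem_singleton]
    constructor
    · rintro ⟨htS, htT⟩
      obtain ⟨F', _, rfl⟩ := Finset.mem_image.1 htT
      have := huniq F'.1 ⟨F'.2, hρ F' ▸ mem_edgeOf.2 ⟨hS, htS⟩⟩
      congr 1
      exact Subtype.ext this
    · rintro rfl
      refine ⟨?_, Finset.mem_image_of_mem _ (Finset.mem_univ _)⟩
      have : S ∈ EdgeOf σ G (ρ ⟨F, hF⟩) := by rw [hρ]; exact hSF
      exact (mem_edgeOf.1 this).2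
  rw [card_minEdges hisoe, ← hTcard]
  have hle := Finset.card_le_card hTY
  have hgreat : IsGreatest { d : ℤ | ∃ i j : ℕ, BettiNe σ K (monIdeal σ K G) i j ∧
      d = (j : ℤ) - (i : ℤ) } (((varsOf σ G).card : ℤ) - T.card) := by
    constructor
    · refine ⟨T.card, (varsOf σ G).card, ?_, rfl⟩
      let g : σ → σ := fun a => if h : a ∈ varsOf σ G then ρ (φ ⟨a, h⟩) else a
      have hgY : ∀ a (h : a ∈ varsOf σ G), g a = ρ (φ ⟨a, h⟩) := fun a h => dif_pos h
      refine bettiNe_of_retract G g T (varsOf σ G) ?_ ?_ ?_ ?_ ?_ ?_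
      · intro a
        by_cases h : a ∈ varsOf σ G
        · rw [hgY a h]
          exact iff_of_true (Finset.mem_image_of_mem _ (Finset.mem_univ _)) h
        · have : g a = a := dif_neg h
          rw [this]
          exact iff_of_false (fun h' => h (hTY h')) h
      · intro t ht
        obtain ⟨F, _, rfl⟩ := Finset.mem_image.1 ht
        rw [hgY _ (hρY F)]
        congr 1
        have hsub := hφ ⟨ρ F, hρY F⟩
        rw [hρ F] at hsub
        refine Subtype.ext ?_
        exact (Finset.mem_filter.1 F.2).2 _ (Finset.mem_filter.1 (φ ⟨ρ F, hρY F⟩).2).1 hsub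
      · intro S hS a ha
        exact mem_varsOf.2 ⟨S, hS, ha⟩
      · intro S hS
        obtain ⟨t, ht⟩ := hone S hS
        have := Finset.mem_inter.1 (ht.symm ▸ Finset.mem_singleton_self t)
        exact ⟨t, this.2, this.1⟩
      · intro a ha S hS hgS
        rw [hgY a ha] at hgS
        have h1 := hρ (φ ⟨a, ha⟩) ▸ mem_edgeOf.2 ⟨hS, hgS⟩
        exact (mem_edgeOf.1 (hφ ⟨a, ha⟩ h1)).2
      · intro t ht
        obtain ⟨S, hS, htS⟩ := mem_varsOf.1 (hTY ht)
        obtain ⟨t', ht'⟩ := hone S hS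
        have : t = t' := Finset.mem_singleton.1 (ht' ▸ Finset.mem_inter.2 ⟨htS, ht⟩)
        exact ⟨S, hS, this ▸ ht'⟩
    · rintro d ⟨i, j, hB, rfl⟩
      by_contra! hlt
      have hV : Vanish (monIdeal σ K G) (j - i - 1) := by
        -- Variables that do not occur can be added to the transversal.
        refine vanish_of_inter_le_one _ _ G (T ∪ (varsOf σ G)ᶜ) ?_ rfl ?_
        · intro S hS
          obtain ⟨t, ht⟩ := hone S hS
          have : S ∩ (T ∪ (varsOf σ G)ᶜ) ⊆ S ∩ T := by
            intro a ha
            obtain ⟨haS, ha⟩ := Finset.mem_inter.1 ha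
            refine Finset.mem_inter.2 ⟨haS, (Finset.mem_union.1 ha).resolve_right fun h => ?_⟩
            exact Finset.mem_compl.1 h (mem_varsOf.2 ⟨S, hS, haS⟩)
          exact (Finset.card_le_card this).trans (by rw [ht]; simp)
        · have : (T ∪ (varsOf σ G)ᶜ)ᶜ = varsOf σ G \ T := by
            ext a; simp [and_comm]
          rw [this, Finset.card_sdiff_of_subset hTY]
          omega
      exact not_bettiNe hV (by omega) hB
  rw [reg, hgreat.csSup_eq]
  ring
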